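/- arXiv:2310.09591 — 2 statements merged into one kernel-verified Lean document; each statement's English description precedes it below -/
import Mathlib

section
/- Let K be an algebraically closed field of characteristic not 2 and R = K D∞ the group algebra of the infinite dihedral group D∞ = ⟨a, b | a² = b² = 1⟩. Every involution u ∈ R (u² = 1) is conjugate by a unit of R to exactly one of the six elements 1, -1, a, -a, b, -b. -/
open Polynomial

namespace DInf

/-- The matrix of `r 1`. -/
noncomputable def Xm (K : Type*) [Field K] : (Matrix (Fin 2) (Fin 2) K[X])ˣ where
  val := !![X, X ^ 2 - 1; 1, X]
  inv := !![X, 1 - X ^ 2; -1, X]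
  val_inv := by
    ext i j : 1
    fin_cases i <;> fin_cases j <;> simp [Matrix.mul_apply, Fin.sum_univ_two] <;> ring
  inv_val := by
    ext i j : 1
    fin_cases i <;> fin_cases j <;> simp [Matrix.mul_apply, Fin.sum_univ_two] <;> ring

/-- The matrix of `sr 0`. -/
noncomputable def Sm (K : Type*) [Field K] : (Matrix (Fin 2) (Fin 2) K[X])ˣ where
  val := !![1, 0; 0, -1]
  inv := !![1, 0; 0, -1]
  val_inv := by
    ext i j : 1
    fin_cases i <;> fin_cases j <;> simp [Matrix.mul_apply, Fin.sum_univ_two]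
  inv_val := by
    ext i j : 1
    fin_cases i <;> fin_cases j <;> simp [Matrix.mul_apply, Fin.sum_univ_two]

theorem Sm_sq (K : Type*) [Field K] : Sm K * Sm K = 1 := Units.ext (Sm K).val_inv

theorem Sm_Xm (K : Type*) [Field K] : Sm K * Xm K * (Sm K)⁻¹ = (Xm K)⁻¹ := by
  apply Units.ext
  change (!![1, 0; 0, -1] * !![X, X ^ 2 - 1; 1, X] * !![1, 0; 0, -1] : Matrix (Fin 2) (Fin 2) K[X])
    = !![X, 1 - X ^ 2; -1, X]
  ext i j : 1
  fin_cases i <;> fin_cases j <;> simp [Matrix.mul_apply, Fin.sum_univ_two]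

theorem Xm_zpow_Sm (K : Type*) [Field K] (i : ℤ) : Xm K ^ i * Sm K = Sm K * Xm K ^ (-i) := by
  have h : Sm K * Xm K ^ (-i) * (Sm K)⁻¹ = Xm K ^ i := by
    rw [← conj_zpow, Sm_Xm, inv_zpow', neg_neg]
  rw [← h]; group

/-- The underlying function of the representation. -/
noncomputable def rho (K : Type*) [Field K] : DihedralGroup 0 → (Matrix (Fin 2) (Fin 2) K[X])ˣ
  | .r i => Xm K ^ (show ℤ from i)
  | .sr i => Sm K * Xm K ^ (show ℤ from i)

/-- The representation. -/
noncomputable def rhoHom (K : Type*) [Field K] :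
    DihedralGroup 0 →* (Matrix (Fin 2) (Fin 2) K[X])ˣ where
  toFun := rho K
  map_one' := zpow_zero _
  map_mul' := by
    rintro (i | i) (j | j)
    · exact zpow_add (Xm K) i j
    · change Sm K * Xm K ^ ((show ℤ from j) - (show ℤ from i)) = Xm K ^ (show ℤ from i) * (Sm K * Xm K ^ (show ℤ from j))
      rw [← mul_assoc, Xm_zpow_Sm, mul_assoc, ← zpow_add]
      congr 2
      exact sub_eq_neg_add _ _
    · change Sm K * Xm K ^ ((show ℤ from i) + (show ℤ from j)) = (Sm K * Xm K ^ (show ℤ from i)) * Xm K ^ (show ℤ from j)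
      rw [mul_assoc]
      congr 1
      exact zpow_add (Xm K) i j
    · change Xm K ^ ((show ℤ from j) - (show ℤ from i)) = (Sm K * Xm K ^ (show ℤ from i)) * (Sm K * Xm K ^ (show ℤ from j))
      rw [mul_assoc, ← mul_assoc (Xm K ^ _), Xm_zpow_Sm, mul_assoc, ← zpow_add, ← mul_assoc, Sm_sq,
        one_mul]
      congr 1
      exact sub_eq_neg_add _ _

/-- The algebra map. -/
noncomputable def phi (K : Type*) [Field K] :
    MonoidAlgebra K (DihedralGroup 0) →ₐ[K] Matrix (Fin 2) (Fin 2) K[X] :=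
  MonoidAlgebra.lift K _ _ ((Units.coeHom _).comp (rhoHom K))

/-- Group elements. -/
noncomputable abbrev g (K : Type*) [Field K] (d : DihedralGroup 0) :
    MonoidAlgebra K (DihedralGroup 0) := MonoidAlgebra.of K (DihedralGroup 0) d

theorem phi_g (K : Type*) [Field K] (d : DihedralGroup 0) :
    phi K (g K d) = (rho K d : Matrix (Fin 2) (Fin 2) K[X]) := by
  simp only [phi, g, MonoidAlgebra.lift_of]
  rfl

theorem phi_r (K : Type*) [Field K] :
    phi K (g K (.r 1)) = !![X, X ^ 2 - 1; 1, X] := by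
  rw [phi_g]; exact congrArg Units.val (zpow_one (Xm K))

theorem phi_r' (K : Type*) [Field K] :
    phi K (g K (.r (-1))) = !![X, 1 - X ^ 2; -1, X] := by
  rw [phi_g]; exact congrArg Units.val (zpow_neg_one (Xm K))

theorem phi_s (K : Type*) [Field K] :
    phi K (g K (.sr 0)) = !![1, 0; 0, -1] := by
  rw [phi_g]
  exact congrArg Units.val ((congrArg (Sm K * ·) (zpow_zero (Xm K))).trans (mul_one _))

theorem g_mul (K : Type*) [Field K] (d e : DihedralGroup 0) : g K d * g K e = g K (d * e) :=
  (map_mul _ _ _).symm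

theorem g_one (K : Type*) [Field K] : g K (.r 0) = 1 := map_one _

theorem phi_sr (K : Type*) [Field K] :
    phi K (g K (.sr 1)) = !![X, X ^ 2 - 1; -1, -X] := by
  have : g K (.sr 1) = g K (.sr 0) * g K (.r 1) := by rw [g_mul]; rfl
  rw [this, map_mul, phi_s, phi_r]
  ext i j : 1
  fin_cases i <;> fin_cases j <;> simp [Matrix.mul_apply, Fin.sum_univ_two]

/-- `θ = (x + x⁻¹)/2`. -/
noncomputable def th (K : Type*) [Field K] : MonoidAlgebra K (DihedralGroup 0) :=
  (2⁻¹ : K) • (g K (.r 1) + g K (.r (-1)))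

theorem th_comm_x (K : Type*) [Field K] : Commute (th K) (g K (.r 1)) := by
  unfold th Commute SemiconjBy
  simp only [smul_mul_assoc, mul_smul_comm, add_mul, mul_add, g_mul]
  rfl

theorem th_comm_s (K : Type*) [Field K] : Commute (th K) (g K (.sr 0)) := by
  unfold th Commute SemiconjBy
  simp only [smul_mul_assoc, mul_smul_comm, add_mul, mul_add, g_mul]
  rw [add_comm]
  rfl

theorem two_th (K : Type*) [Field K] (h2 : (2 : K) ≠ 0) :
    2 * th K = g K (.r 1) + g K (.r (-1)) := by
  have : (2 : MonoidAlgebra K (DihedralGroup 0)) = algebraMap K _ 2 :=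
    (map_ofNat _ 2).symm
  rw [this, ← Algebra.smul_def, th, smul_smul, mul_inv_cancel₀ h2, one_smul]

/-- general element -/
noncomputable def Ga (K : Type*) [Field K] (p q m n : K[X]) : MonoidAlgebra K (DihedralGroup 0) :=
  aeval (th K) p + aeval (th K) q * g K (.sr 0) + aeval (th K) m * g K (.r 1)
    + aeval (th K) n * (g K (.sr 0) * g K (.r 1))

theorem Ga_add (K : Type*) [Field K] (p q m n p' q' m' n' : K[X]) :
    Ga K p q m n + Ga K p' q' m' n' = Ga K (p + p') (q + q') (m + m') (n + n') := by
  simp only [Ga, map_add, add_mul]; abel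

theorem Ga_smul (K : Type*) [Field K] (c : K) (p q m n : K[X]) :
    c • Ga K p q m n = Ga K (c • p) (c • q) (c • m) (c • n) := by
  simp only [Ga, map_smul, smul_add, smul_mul_assoc]

theorem xx (K : Type*) [Field K] (h2 : (2 : K) ≠ 0) :
    g K (.r 1) * g K (.r 1) = 2 * th K * g K (.r 1) - 1 := by
  rw [two_th K h2, add_mul, g_mul K (.r (-1)), ← g_one]
  exact (add_sub_cancel_right _ _).symm

theorem xs (K : Type*) [Field K] (h2 : (2 : K) ≠ 0) :
    g K (.r 1) * g K (.sr 0) = 2 * th K * g K (.sr 0) - g K (.sr 0) * g K (.r 1) := by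
  rw [two_th K h2, add_mul, g_mul K (.r (-1)), g_mul K (.sr 0)]
  exact (add_sub_cancel_right _ _).symm

theorem ss (K : Type*) [Field K] : g K (.sr 0) * g K (.sr 0) = 1 := by
  rw [g_mul, ← g_one]; rfl

theorem th_comm_2 (K : Type*) [Field K] : Commute (2 * th K) (g K (.sr 0)) := by
  have : Commute (2 : MonoidAlgebra K (DihedralGroup 0)) (g K (.sr 0)) := Nat.cast_commute 2 _
  exact this.mul_left (th_comm_s K)

theorem Ga_mul_x (K : Type*) [Field K] (h2 : (2 : K) ≠ 0) (p q m n : K[X]) :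
    Ga K p q m n * g K (.r 1) = Ga K (-m) (-n) (p + m * (2 * X)) (q + n * (2 * X)) := by
  have e : g K (.sr 0) * g K (.r 1) * g K (.r 1)
      = 2 * th K * (g K (.sr 0) * g K (.r 1)) - g K (.sr 0) := by
    rw [mul_assoc, xx K h2, mul_sub, ← mul_assoc, ← (th_comm_2 K).eq, mul_one, mul_assoc]
  simp only [Ga, add_mul, mul_assoc (aeval (th K) _), e, xx K h2]
  simp only [map_add, map_mul, map_neg, aeval_X, map_ofNat, add_mul, mul_sub, ← mul_assoc]
  noncomm_ring

theorem Ga_mul_s (K : Type*) [Field K] (h2 : (2 : K) ≠ 0) (p q m n : K[X]) :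
    Ga K p q m n * g K (.sr 0) = Ga K (q + n * (2 * X)) (p + m * (2 * X)) (-n) (-m) := by
  have e : g K (.sr 0) * g K (.r 1) * g K (.sr 0) = 2 * th K - g K (.r 1) := by
    rw [mul_assoc, xs K h2, mul_sub, ← mul_assoc, ← (th_comm_2 K).eq, mul_assoc, ss, mul_one,
      ← mul_assoc, ss, one_mul]
  simp only [Ga, add_mul, mul_assoc (aeval (th K) _), e, xs K h2, ss]
  simp only [map_add, map_mul, map_neg, aeval_X, map_ofNat, add_mul, mul_sub, ← mul_assoc]
  noncomm_ring

theorem Ga_th (K : Type*) [Field K] (p q m n : K[X]) :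
    Ga K p q m n * (2 * th K) = Ga K (p * (2 * X)) (q * (2 * X)) (m * (2 * X)) (n * (2 * X)) := by
  have c1 : g K (.sr 0) * (2 * th K) = (2 * th K) * g K (.sr 0) := (th_comm_2 K).eq.symm
  have c2 : g K (.r 1) * (2 * th K) = (2 * th K) * g K (.r 1) := by
    have : Commute (2 : MonoidAlgebra K (DihedralGroup 0)) (g K (.r 1)) := Nat.cast_commute 2 _
    exact (this.mul_left (th_comm_x K)).eq.symm
  have c3 : g K (.sr 0) * g K (.r 1) * (2 * th K) = (2 * th K) * (g K (.sr 0) * g K (.r 1)) := by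
    rw [mul_assoc, c2, ← mul_assoc, c1, mul_assoc]
  simp only [Ga, add_mul, mul_assoc (aeval (th K) _), c3, c2, c1]
  simp only [map_mul, aeval_X, map_ofNat, mul_assoc]

theorem exists_Ga_r (K : Type*) [Field K] (h2 : (2 : K) ≠ 0) (i : ℤ) :
    ∃ p q m n, g K (.r i) = Ga K p q m n := by
  induction i using Int.induction_on with
  | zero => exact ⟨1, 0, 0, 0, by rw [show g K (.r (0 : ℤ)) = 1 from g_one K]; simp [Ga]⟩
  | succ i ih =>
    obtain ⟨p, q, m, n, h⟩ := ih
    refine ⟨_, _, _, _, Eq.trans ?_ (Ga_mul_x K h2 p q m n)⟩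
    rw [← h, g_mul]; rfl
  | pred i ih =>
    obtain ⟨p, q, m, n, h⟩ := ih
    have e : g K (.r (-1)) = 2 * th K + (-1 : K) • g K (.r 1) := by
      rw [two_th K h2, neg_one_smul]; abel
    have : g K (.r ((-i - 1 : ℤ))) = g K (.r (-i : ℤ)) * g K (.r (-1)) := by
      rw [g_mul]; rfl
    rw [this, e, h, mul_add, mul_smul_comm, Ga_th, Ga_mul_x K h2, Ga_smul, Ga_add]
    exact ⟨_, _, _, _, rfl⟩

theorem exists_Ga (K : Type*) [Field K] (h2 : (2 : K) ≠ 0) (u : MonoidAlgebra K (DihedralGroup 0)) :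
    ∃ p q m n, u = Ga K p q m n := by
  induction u using MonoidAlgebra.induction_on with
  | of d =>
    rcases d with i | i
    · exact exists_Ga_r K h2 i
    · obtain ⟨p, q, m, n, h⟩ := exists_Ga_r K h2 (-(show ℤ from i))
      refine ⟨_, _, _, _, Eq.trans ?_ (Ga_mul_s K h2 p q m n)⟩
      rw [← h, g_mul]
      change g K _ = g K (.sr ((0 : ℤ) - (-(show ℤ from i))))
      congr 2
      exact (by intro i; omega : ∀ i : ℤ, i = 0 - -i) i
  | add f g hf hg =>
    obtain ⟨p, q, m, n, rfl⟩ := hf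
    obtain ⟨p', q', m', n', rfl⟩ := hg
    exact ⟨_, _, _, _, Ga_add ..⟩
  | smul c f hf =>
    obtain ⟨p, q, m, n, rfl⟩ := hf
    exact ⟨_, _, _, _, Ga_smul ..⟩

theorem phi_th (K : Type*) [Field K] (h2 : (2 : K) ≠ 0) :
    phi K (th K) = algebraMap K[X] _ X := by
  rw [th, map_smul, map_add, phi_r, phi_r']
  have : C (2⁻¹ : K) * X + C (2⁻¹ : K) * X = X := by
    rw [← add_mul, ← C_add, ← two_mul, mul_inv_cancel₀ h2, C_1, one_mul]
  ext i j : 1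
  fin_cases i <;> fin_cases j <;>
    simp [Matrix.algebraMap_matrix_apply, smul_eq_C_mul, mul_add, this]

theorem phi_aeval (K : Type*) [Field K] (h2 : (2 : K) ≠ 0) (p : K[X]) :
    phi K (aeval (th K) p) = !![p, 0; 0, p] := by
  rw [← aeval_algHom_apply, phi_th K h2, aeval_algebraMap_apply, aeval_X_left_apply]
  ext i j : 1
  fin_cases i <;> fin_cases j <;> simp [Matrix.algebraMap_matrix_apply]

theorem phi_Ga (K : Type*) [Field K] (h2 : (2 : K) ≠ 0) (p q m n : K[X]) :
    phi K (Ga K p q m n) =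
      !![p + q + (m + n) * X, (m + n) * (X ^ 2 - 1); m - n, p - q + (m - n) * X] := by
  simp only [Ga, map_add, map_mul, phi_aeval K h2, phi_s, phi_r]
  ext i j : 1
  fin_cases i <;> fin_cases j <;> simp [Matrix.mul_apply, Fin.sum_univ_two] <;> ring

theorem two_ne (K : Type*) [Field K] (h2 : (2 : K) ≠ 0) : (2 : K[X]) ≠ 0 := by
  rw [show (2 : K[X]) = C 2 from (map_ofNat C 2).symm]; exact C_ne_zero.2 h2

theorem sq_ne (K : Type*) [Field K] : (X ^ 2 - 1 : K[X]) ≠ 0 := by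
  have := (monic_X_pow_sub_C (1 : K) two_ne_zero).ne_zero
  simpa using this

theorem phi_inj (K : Type*) [Field K] (h2 : (2 : K) ≠ 0) : Function.Injective (phi K) := by
  rw [injective_iff_map_eq_zero]
  intro u hu
  obtain ⟨p, q, m, n, rfl⟩ := exists_Ga K h2 u
  rw [phi_Ga K h2] at hu
  have h00 := congrFun (congrFun hu 0) 0
  have h01 := congrFun (congrFun hu 0) 1
  have h10 := congrFun (congrFun hu 1) 0
  have h11 := congrFun (congrFun hu 1) 1
  simp [sq_ne] at h00 h01 h10 h11
  have t := two_ne K h2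
  have hm : m = 0 := by
    have : 2 * m = 0 := by linear_combination h01 + h10
    simpa [t] using this
  have hn : n = 0 := by linear_combination h01 - hm
  subst hm hn
  have hp : p = 0 := by
    have : 2 * p = 0 := by linear_combination h00 + h11
    simpa [t] using this
  have hq : q = 0 := by linear_combination h00 - hp
  subst hp hq
  simp [Ga]

theorem phi_dvd (K : Type*) [Field K] (h2 : (2 : K) ≠ 0) (u : MonoidAlgebra K (DihedralGroup 0)) :
    (X ^ 2 - 1 : K[X]) ∣ phi K u 0 1 := by
  obtain ⟨p, q, m, n, rfl⟩ := exists_Ga K h2 u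
  rw [phi_Ga K h2]
  exact Dvd.intro_left _ rfl

theorem phi_surj (K : Type*) [Field K] (h2 : (2 : K) ≠ 0) (a k c d : K[X]) :
    ∃ u, phi K u = !![a, (X ^ 2 - 1) * k; c, d] := by
  have t : C (2⁻¹ : K) * 2 = 1 := by
    rw [show (2 : K[X]) = C 2 from (map_ofNat C 2).symm, ← C_mul, inv_mul_cancel₀ h2, C_1]
  set h := C (2⁻¹ : K)
  refine ⟨Ga K (h * (a + d - k * X - c * X)) (h * (a - d - k * X + c * X)) (h * (k + c))
    (h * (k - c)), ?_⟩
  rw [phi_Ga K h2]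
  ext i j : 1
  fin_cases i <;> fin_cases j <;> simp
  · linear_combination a * t
  · linear_combination k * (X ^ 2 - 1) * t
  · linear_combination c * t
  · linear_combination d * t

theorem conj_of (K : Type*) [Field K] (h2 : (2 : K) ≠ 0) (u v : MonoidAlgebra K (DihedralGroup 0))
    (a b c d : K[X]) (hb : (X ^ 2 - 1) ∣ b) (k : K) (hk : k ≠ 0) (hdet : a * d - b * c = C k)
    (h : phi K u * !![a, b; c, d] = !![a, b; c, d] * phi K v) :
    ∃ ν : (MonoidAlgebra K (DihedralGroup 0))ˣ, (↑ν⁻¹ : MonoidAlgebra K (DihedralGroup 0)) * u * ν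
      = v := by
  obtain ⟨b, rfl⟩ := hb
  have t : C (k⁻¹) * C k = 1 := by
    rw [← C_mul, inv_mul_cancel₀ hk, C_1]
  obtain ⟨n, hn⟩ := phi_surj K h2 a b c d
  obtain ⟨n', hn'⟩ := phi_surj K h2 (C k⁻¹ * d) (-(C k⁻¹ * b)) (-(C k⁻¹ * c)) (C k⁻¹ * a)
  have e1 : n * n' = 1 := by
    apply phi_inj K h2
    rw [map_mul, hn, hn', map_one]
    ext i j : 1
    fin_cases i <;> fin_cases j <;> simp [Matrix.mul_apply, Fin.sum_univ_two]
    · linear_combination C k⁻¹ * hdet + t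
    · ring
    · ring
    · linear_combination C k⁻¹ * hdet + t
  have e2 : n' * n = 1 := by
    apply phi_inj K h2
    rw [map_mul, hn, hn', map_one]
    ext i j : 1
    fin_cases i <;> fin_cases j <;> simp [Matrix.mul_apply, Fin.sum_univ_two]
    · linear_combination C k⁻¹ * hdet + t
    · ring
    · ring
    · linear_combination C k⁻¹ * hdet + t
  refine ⟨⟨n, n', e1, e2⟩, ?_⟩
  change n' * u * n = v
  have : u * n = n * v := by
    apply phi_inj K h2
    rw [map_mul, map_mul, hn, h]
  rw [mul_assoc, this, ← mul_assoc, e2, one_mul]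

theorem factor (K : Type*) [Field K] (h2 : (2 : K) ≠ 0) (α β γ : K[X]) (h : α * α + β * γ = 1) :
    ∃ p g h r : K[X], 1 + α = g * p ∧ 1 - α = h * r ∧ β = p * h ∧ γ = g * r := by
  by_cases h0 : 1 + α = 0
  · have t : C (2⁻¹ : K) * 2 = 1 := by
      rw [show (2 : K[X]) = C 2 from (map_ofNat C 2).symm, ← C_mul, inv_mul_cancel₀ h2, C_1]
    have hbg : β * γ = 0 := by linear_combination h + (1 - α) * h0
    rcases mul_eq_zero.1 hbg with hb | hc
    · refine ⟨0, γ, 2, 1, by simp [h0], by linear_combination -h0, by simp [hb], by simp⟩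
    · refine ⟨C (2⁻¹ : K) * β, 0, 2, 1, by simp [h0], by linear_combination -h0,
        by linear_combination -β * t, by simp [hc]⟩
  · have hd : (1 + α) ∣ β * γ := ⟨1 - α, by linear_combination h⟩
    obtain ⟨p, g, ⟨h', rfl⟩, ⟨r, rfl⟩, e⟩ := exists_dvd_and_dvd_of_dvd_mul hd
    refine ⟨p, g, h', r, by rw [e, mul_comm], ?_, rfl, rfl⟩
    apply mul_left_cancel₀ h0
    linear_combination -h - h' * r * e

theorem sq_dvd (K : Type*) [Field K] (h2 : (2 : K) ≠ 0) (f : K[X]) (h1 : f.eval 1 = 0)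
    (h1' : f.eval (-1) = 0) : (X ^ 2 - 1 : K[X]) ∣ f := by
  have : (X ^ 2 - 1 : K[X]) = (X - C 1) * (X - C (-1)) := by simp; ring
  rw [this]
  apply IsCoprime.mul_dvd
  · apply isCoprime_X_sub_C_of_isUnit_sub
    rw [sub_neg_eq_add, one_add_one_eq_two]
    exact h2.isUnit
  · exact dvd_iff_isRoot.2 h1
  · exact dvd_iff_isRoot.2 h1'

theorem exist (K : Type*) [Field K] (h2 : (2 : K) ≠ 0)
    (u : MonoidAlgebra K (DihedralGroup 0)) (hu : u * u = 1) :
    ∃ v ∈ ({1, -1, g K (.sr 0), -g K (.sr 0), g K (.sr 1), -g K (.sr 1)} :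
        Set (MonoidAlgebra K (DihedralGroup 0))),
      ∃ ν : (MonoidAlgebra K (DihedralGroup 0))ˣ,
        (↑ν⁻¹ : MonoidAlgebra K (DihedralGroup 0)) * u * ν = v := by
  have hM : phi K u * phi K u = 1 := by rw [← map_mul, hu, map_one]
  have hdv := phi_dvd K h2 u
  obtain ⟨α, hα⟩ : ∃ α, α = phi K u 0 0 := ⟨_, rfl⟩
  obtain ⟨β, hβ⟩ : ∃ α, α = phi K u 0 1 := ⟨_, rfl⟩
  obtain ⟨γ, hγ⟩ : ∃ α, α = phi K u 1 0 := ⟨_, rfl⟩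
  obtain ⟨δ, hδ⟩ : ∃ α, α = phi K u 1 1 := ⟨_, rfl⟩
  have hφ : phi K u = !![α, β; γ, δ] := by
    rw [hα, hβ, hγ, hδ]; exact Matrix.eta_fin_two _
  rw [← hβ] at hdv
  clear hα hβ hγ hδ
  rw [hφ] at hM
  have h00 := congrFun (congrFun hM 0) 0
  have h01 := congrFun (congrFun hM 0) 1
  have h10 := congrFun (congrFun hM 1) 0
  have h11 := congrFun (congrFun hM 1) 1
  simp [Matrix.mul_apply, Fin.sum_univ_two] at h00 h01 h10 h11
  by_cases htr : α + δ = 0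
  · obtain rfl : δ = -α := by linear_combination htr
    obtain ⟨p, q, h, r, e1, e2, rfl, rfl⟩ := factor K h2 α β γ h00
    have hdet : q * p + h * r = 2 := by linear_combination -e1 - e2
    have z : ∀ x : K, x ^ 2 = 1 → p.eval x = 0 ∨ h.eval x = 0 := by
      intro x hx
      rw [← mul_eq_zero, ← eval_mul]
      obtain ⟨k, hk⟩ := hdv
      rw [hk]; simp [hx]
    have c2 : (C 2 : K[X]) = 2 := map_ofNat C 2
    have c4 : (C 4 : K[X]) = 4 := map_ofNat C 4
    have h4 : (4 : K) ≠ 0 := by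
      rw [show (4 : K) = 2 * 2 by norm_num]; exact mul_ne_zero h2 h2
    rcases z 1 (by simp) with z1 | z1 <;> rcases z (-1) (by simp) with z2 | z2
    · refine ⟨-g K (.sr 0), by simp, conj_of K h2 u _ (-h) p q r (sq_dvd K h2 _ z1 z2) (-2)
        (neg_ne_zero.2 h2) (by rw [C_neg, c2]; linear_combination -hdet) ?_⟩
      rw [hφ, map_neg, phi_s]
      ext i j : 1
      fin_cases i <;> fin_cases j <;> simp [Matrix.mul_apply, Fin.sum_univ_two]
      · linear_combination (-h) * e1
      · linear_combination (-p) * e2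
      · linear_combination q * e2
      · linear_combination (-r) * e1
    · refine ⟨-g K (.sr 1), by simp, conj_of K h2 u _ (p - h) (p * (1 + X) - h * (X - 1)) (r + q)
        (r * (1 + X) + q * (X - 1)) (sq_dvd K h2 _ (by simp [z1]) (by simp [z2])) (-4)
        (neg_ne_zero.2 h4) (by rw [C_neg, c4]; linear_combination (-2) * hdet) ?_⟩
      rw [hφ, map_neg, phi_sr]
      ext i j : 1
      fin_cases i <;> fin_cases j <;> simp [Matrix.mul_apply, Fin.sum_univ_two]
      · linear_combination (-p) * e2 - h * e1
      · linear_combination (1 + X) * (-p) * e2 - (X - 1) * h * e1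
      · linear_combination (-r) * e1 + q * e2
      · linear_combination (1 + X) * (-r) * e1 + (X - 1) * q * e2
    · refine ⟨g K (.sr 1), by simp, conj_of K h2 u _ (p - h) (p * (X - 1) - h * (X + 1)) (r + q)
        (r * (X - 1) + q * (X + 1)) (sq_dvd K h2 _ (by simp [z1]) (by simp [z2])) 4
        h4 (by rw [c4]; linear_combination 2 * hdet) ?_⟩
      rw [hφ, phi_sr]
      ext i j : 1
      fin_cases i <;> fin_cases j <;> simp [Matrix.mul_apply, Fin.sum_univ_two]
      · linear_combination (-p) * e2 - h * e1
      · linear_combination (X - 1) * (-p) * e2 - (X + 1) * h * e1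
      · linear_combination (-r) * e1 + q * e2
      · linear_combination (X - 1) * (-r) * e1 + (X + 1) * q * e2
    · refine ⟨g K (.sr 0), by simp, conj_of K h2 u _ p (-h) r q
        ((dvd_neg).2 (sq_dvd K h2 _ z1 z2)) 2
        h2 (by rw [c2]; linear_combination hdet) ?_⟩
      rw [hφ, phi_s]
      ext i j : 1
      fin_cases i <;> fin_cases j <;> simp [Matrix.mul_apply, Fin.sum_univ_two]
      · linear_combination (-p) * e2
      · linear_combination (-h) * e1
      · linear_combination (-r) * e1
      · linear_combination q * e2
  · have hb : β = 0 := by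
      have : β * (α + δ) = 0 := by linear_combination h01
      simpa [htr] using this
    have hc : γ = 0 := by
      have : γ * (α + δ) = 0 := by linear_combination h10
      simpa [htr] using this
    subst hb hc
    have hαδ : α = δ := by
      have : (α - δ) * (α + δ) = 0 := by linear_combination h00 - h11
      rcases mul_eq_zero.1 this with h | h
      · exact sub_eq_zero.1 h
      · exact absurd h htr
    subst hαδ
    have : (α - 1) * (α + 1) = 0 := by linear_combination h00
    rcases mul_eq_zero.1 this with h | h
    · refine ⟨1, by simp, 1, ?_⟩
      obtain rfl := sub_eq_zero.1 h
      simp only [inv_one, Units.val_one, one_mul, mul_one]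
      apply phi_inj K h2
      rw [hφ, map_one, Matrix.one_fin_two]
    · refine ⟨-1, by simp, 1, ?_⟩
      obtain rfl := eq_neg_of_add_eq_zero_left h
      simp only [inv_one, Units.val_one, one_mul, mul_one]
      apply phi_inj K h2
      rw [hφ, map_neg, map_one, Matrix.one_fin_two]
      simp

theorem chi_conj (K : Type*) [Field K] (h2 : (2 : K) ≠ 0) (i : Fin 2) (x : K) (hx : x ^ 2 = 1)
    (u v : MonoidAlgebra K (DihedralGroup 0))
    (h : ∃ ν : (MonoidAlgebra K (DihedralGroup 0))ˣ,
      (↑ν⁻¹ : MonoidAlgebra K (DihedralGroup 0)) * u * ν = v) :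
    (phi K v i i).eval x = (phi K u i i).eval x := by
  have z : ∀ w, (phi K w 0 1).eval x = 0 := by
    intro w
    obtain ⟨k, hk⟩ := phi_dvd K h2 w
    rw [hk]; simp [hx]
  have m : ∀ w w', (phi K (w * w') i i).eval x = (phi K w i i).eval x * (phi K w' i i).eval x := by
    intro w w'
    rw [map_mul, Matrix.mul_apply, Fin.sum_univ_two]
    fin_cases i <;> simp [z]
  obtain ⟨ν, rfl⟩ := h
  rw [m, m, mul_right_comm, ← m, Units.inv_mul]
  simp

theorem uniq (K : Type*) [Field K] (h2 : (2 : K) ≠ 0)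
    (v w : MonoidAlgebra K (DihedralGroup 0))
    (hv : v ∈ ({1, -1, g K (.sr 0), -g K (.sr 0), g K (.sr 1), -g K (.sr 1)} :
        Set (MonoidAlgebra K (DihedralGroup 0))))
    (hw : w ∈ ({1, -1, g K (.sr 0), -g K (.sr 0), g K (.sr 1), -g K (.sr 1)} :
        Set (MonoidAlgebra K (DihedralGroup 0))))
    (h : ∀ (i : Fin 2) (x : K), x ^ 2 = 1 → (phi K v i i).eval x = (phi K w i i).eval x) :
    v = w := by
  have h1 := h 0 1 (by simp)
  have h3 := h 0 (-1) (by simp)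
  have h5 := h 1 1 (by simp)
  clear h
  have n1 : (1 : K) ≠ -1 := fun e => h2 (by linear_combination e)
  have n2 : (-1 : K) ≠ 1 := n1.symm
  simp only [Set.mem_insert_iff, Set.mem_singleton_iff] at hv hw
  rcases hv with rfl | rfl | rfl | rfl | rfl | rfl <;>
  rcases hw with rfl | rfl | rfl | rfl | rfl | rfl <;>
  first
  | rfl
  | (exfalso
     simp only [map_neg, map_one, phi_s, phi_sr] at h1 h3 h5
     simp [n1, n2] at h1 h3 h5)

end DInf

theorem stmt_7 (K : Type*) [Field K] [IsAlgClosed K] (hK : ringChar K ≠ 2)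
    (u : MonoidAlgebra K (DihedralGroup 0)) (hu : u * u = 1) :
    let R := MonoidAlgebra K (DihedralGroup 0)
    let a : R := MonoidAlgebra.of K (DihedralGroup 0) (DihedralGroup.sr 0)
    let b : R := MonoidAlgebra.of K (DihedralGroup 0) (DihedralGroup.sr 1)
    ∃! v, v ∈ ({1, -1, a, -a, b, -b} : Set R) ∧
      ∃ ν : Rˣ, (↑ν⁻¹ : R) * u * ν = v := by
  intro R a b
  have h2 : (2 : K) ≠ 0 := Ring.two_ne_zero hK
  obtain ⟨v, hv, hc⟩ := DInf.exist K h2 u hu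
  refine ⟨v, ⟨hv, hc⟩, ?_⟩
  rintro w ⟨hw, hc'⟩
  refine DInf.uniq K h2 w v hw hv fun i x hx => ?_
  rw [DInf.chi_conj K h2 i x hx u v hc, DInf.chi_conj K h2 i x hx u w hc']
end

section
/- Let K be an algebraically closed field of characteristic not 2 and R = K D∞. Every idempotent of R is conjugate by a unit to exactly one of 0, 1, (1-a)/2, (1+a)/2, (1-b)/2, (1+b)/2; in particular R has exactly four conjugacy classes of idempotents other than 0 and 1. -/
open Polynomial

namespace DInf

/-- Universal property of the infinite dihedral group. -/
theorem exists_groupHom {G : Type*} [Group G] (a b : G) (ha : a * a = 1) (hb : b * b = 1) :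
    ∃ f : DihedralGroup 0 →* G, f (DihedralGroup.sr 0) = a ∧ f (DihedralGroup.sr 1) = b := by
  have hai : a⁻¹ = a := inv_eq_of_mul_eq_one_left ha
  have hbi : b⁻¹ = b := inv_eq_of_mul_eq_one_left hb
  have key : ∀ i : ℤ, (a * b) ^ i * a = a * (a * b) ^ (-i) := by
    intro i
    have h : SemiconjBy a (a * b) ((a * b)⁻¹) := by
      unfold SemiconjBy
      rw [mul_inv_rev, hai, hbi, mul_assoc, ha, mul_one, ← mul_assoc, ha, one_mul]
    have h2 := h.zpow_right (-i)
    rw [SemiconjBy, inv_zpow', neg_neg] at h2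
    exact h2.symm
  let F : DihedralGroup 0 → G := fun g => match g with
    | DihedralGroup.r i => (a * b) ^ (show ℤ from i)
    | DihedralGroup.sr i => a * (a * b) ^ (show ℤ from i)
  have F1 : ∀ i : ℤ, F (DihedralGroup.r (show ZMod 0 from i)) = (a * b) ^ i := fun _ => rfl
  have F2 : ∀ i : ℤ, F (DihedralGroup.sr (show ZMod 0 from i)) = a * (a * b) ^ i := fun _ => rfl
  refine ⟨⟨⟨F, ?_⟩, ?_⟩, ?_, ?_⟩
  · exact zpow_zero _
  · rintro (i | i) (j | j)
    · exact (zpow_add (a * b) i j)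
    · change a * (a * b) ^ ((show ℤ from j) - (show ℤ from i)) = (a * b) ^ (show ℤ from i) * (a * (a * b) ^ (show ℤ from j))
      rw [← mul_assoc, key, mul_assoc, ← zpow_add]
      congr 2
      exact sub_eq_neg_add (α := ℤ) j i
    · change a * (a * b) ^ ((show ℤ from i) + (show ℤ from j)) = (a * (a * b) ^ (show ℤ from i)) * (a * b) ^ (show ℤ from j)
      rw [mul_assoc, ← zpow_add]
    · change (a * b) ^ ((show ℤ from j) - (show ℤ from i)) = (a * (a * b) ^ (show ℤ from i)) * (a * (a * b) ^ (show ℤ from j))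
      rw [mul_assoc, ← mul_assoc _ a, key, ← mul_assoc, ← mul_assoc, ha, one_mul, ← zpow_add]
      congr 1
      exact sub_eq_neg_add (α := ℤ) j i
  · change a * (a * b) ^ (0 : ℤ) = a
    simp
  · change a * (a * b) ^ (1 : ℤ) = b
    rw [zpow_one, ← mul_assoc, ha, one_mul]

variable (K : Type*) [Field K]

/-- The group algebra. -/
abbrev RR := MonoidAlgebra K (DihedralGroup 0)

/-- first generator -/
noncomputable def ga : RR K := MonoidAlgebra.of K (DihedralGroup 0) (DihedralGroup.sr 0)

/-- second generator -/
noncomputable def gb : RR K := MonoidAlgebra.of K (DihedralGroup 0) (DihedralGroup.sr 1)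

theorem ga_sq : ga K * ga K = 1 := by
  rw [ga, ← map_mul, DihedralGroup.sr_mul_sr, sub_self, DihedralGroup.r_zero, map_one]

theorem gb_sq : gb K * gb K = 1 := by
  rw [gb, ← map_mul, DihedralGroup.sr_mul_sr, sub_self, DihedralGroup.r_zero, map_one]

theorem exists_algHom {A : Type*} [Ring A] [Algebra K A] (a b : A) (ha : a * a = 1)
    (hb : b * b = 1) : ∃ f : RR K →ₐ[K] A, f (ga K) = a ∧ f (gb K) = b := by
  obtain ⟨f, hf1, hf2⟩ := exists_groupHom (⟨a, a, ha, ha⟩ : Aˣ) (⟨b, b, hb, hb⟩ : Aˣ)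
    (Units.ext ha) (Units.ext hb)
  refine ⟨MonoidAlgebra.lift K A _ ((Units.coeHom A).comp f), ?_, ?_⟩
  · rw [ga, MonoidAlgebra.lift_of]; simp [hf1]
  · rw [gb, MonoidAlgebra.lift_of]; simp [hf2]

theorem gen (P : RR K → Prop) (h1 : P 1) (hadd : ∀ x y, P x → P y → P (x + y))
    (hsmul : ∀ (c : K) x, P x → P (c • x)) (ha : ∀ x, P x → P (ga K * x))
    (hb : ∀ x, P x → P (gb K * x)) (x : RR K) : P x := by
  have hr : ∀ i : ℤ, P (MonoidAlgebra.of K (DihedralGroup 0)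
      (DihedralGroup.r (show ZMod 0 from i))) := by
    intro i
    induction i using Int.induction_on with
    | zero => exact h1
    | succ i ih =>
      have := ha _ (hb _ ih)
      rw [ga, gb, ← map_mul, ← map_mul] at this
      convert this using 3
      change DihedralGroup.r _ = DihedralGroup.r _
      congr 1
      change (i + 1 : ℤ) = (1 + i : ℤ) - 0
      ring
    | pred i ih =>
      have := hb _ (ha _ ih)
      rw [ga, gb, ← map_mul, ← map_mul] at this
      convert this using 3
      change DihedralGroup.r _ = DihedralGroup.r _
      congr 1
      change (-i - 1 : ℤ) = (0 + -i : ℤ) - 1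
      ring
  induction x using MonoidAlgebra.induction_on with
  | of g =>
    rcases g with i | i
    · exact hr i
    · have := ha _ (hr i)
      rw [ga, ← map_mul] at this
      convert this using 3
      change DihedralGroup.sr _ = DihedralGroup.sr _
      congr 1
      exact (zero_add (M := ℤ) i).symm
  | add x y hx hy => exact hadd x y hx hy
  | smul c x hx => exact hsmul c x hx

/-- half the central element -/
noncomputable def tau : RR K := (2 : K)⁻¹ • (ga K * gb K + gb K * ga K)

/-- normal form -/
noncomputable def nf (p : Fin 4 → K[X]) : RR K :=
  aeval (tau K) (p 0) + aeval (tau K) (p 1) * ga K + aeval (tau K) (p 2) * gb K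
    + aeval (tau K) (p 3) * (ga K * gb K)

theorem comm_ga : Commute (ga K) (tau K) := by
  unfold Commute SemiconjBy tau
  rw [mul_smul_comm, smul_mul_assoc, mul_add, add_mul, ← mul_assoc, ga_sq, mul_assoc (gb K),
    ga_sq, add_comm, mul_assoc, one_mul, mul_one]

theorem comm_gb : Commute (gb K) (tau K) := by
  unfold Commute SemiconjBy tau
  rw [mul_smul_comm, smul_mul_assoc, mul_add, add_mul, ← mul_assoc (gb K) (gb K), gb_sq,
    mul_assoc (ga K), gb_sq, add_comm, mul_assoc, one_mul, mul_one]

theorem comm_aeval {x t : RR K} (h : Commute x t) (p : K[X]) : Commute x (aeval t p) := by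
  induction p using Polynomial.induction_on' with
  | add p q hp hq => rw [map_add]; exact hp.add_right hq
  | monomial n c =>
    rw [aeval_monomial]
    exact (Algebra.commute_algebraMap_right c x).mul_right (h.pow_right n)

variable {K}

theorem two_ne_s8 (hK : ringChar K ≠ 2) : (2 : K) ≠ 0 := Ring.two_ne_zero hK

theorem gb_ga (h2 : (2 : K) ≠ 0) : gb K * ga K = 2 * tau K - ga K * gb K := by
  have : 2 * tau K = ga K * gb K + gb K * ga K := by
    rw [tau, two_mul, ← add_smul, ← two_mul, mul_inv_cancel₀ h2, one_smul]
  rw [this]; abel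

theorem ring_a {A : Type*} [Ring A] {a b P0 P1 P2 P3 : A} (h0 : a * P0 = P0 * a)
    (h1 : a * P1 = P1 * a) (h2 : a * P2 = P2 * a) (h3 : a * P3 = P3 * a) (ha : a * a = 1) :
    a * (P0 + P1 * a + P2 * b + P3 * (a * b)) = P1 + P0 * a + P3 * b + P2 * (a * b) := by
  simp only [mul_add, ← mul_assoc, h0, h1, h2, h3]
  rw [mul_assoc P1, mul_assoc P3, ha, mul_one, mul_one]
  abel

theorem ring_b {A : Type*} [Ring A] {a b t P0 P1 P2 P3 : A} (h0 : b * P0 = P0 * b)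
    (h1 : b * P1 = P1 * b) (h2 : b * P2 = P2 * b) (h3 : b * P3 = P3 * b)
    (t1 : P1 * t = t * P1) (t3 : P3 * t = t * P3) (hba : b * a = t - a * b) (hb : b * b = 1) :
    b * (P0 + P1 * a + P2 * b + P3 * (a * b)) =
      (P2 + t * P1) + (-P3) * a + (P0 + t * P3) * b + (-P1) * (a * b) := by
  simp only [mul_add, ← mul_assoc, h0, h1, h2, h3]
  rw [mul_assoc P1, mul_assoc P3, mul_assoc P2, hb, hba, mul_sub, mul_sub, sub_mul, t1, t3,
    ← mul_assoc P3 a b, mul_assoc (P3 * a), hb]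
  noncomm_ring

theorem exists_nf (h2 : (2 : K) ≠ 0) (x : RR K) : ∃ p, x = nf K p := by
  have ca := fun p => (comm_aeval K (comm_ga K) p).eq
  have cb := fun p => (comm_aeval K (comm_gb K) p).eq
  induction x using gen with
  | h1 => exact ⟨![1, 0, 0, 0], by simp [nf]⟩
  | hadd x y hx hy =>
    obtain ⟨p, rfl⟩ := hx
    obtain ⟨q, rfl⟩ := hy
    refine ⟨p + q, ?_⟩
    simp only [nf, Pi.add_apply, map_add, add_mul]
    abel
  | hsmul c x hx =>
    obtain ⟨p, rfl⟩ := hx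
    refine ⟨c • p, ?_⟩
    simp only [nf, Pi.smul_apply, map_smul, smul_add, smul_mul_assoc]
  | ha x hx =>
    obtain ⟨p, rfl⟩ := hx
    refine ⟨![p 1, p 0, p 3, p 2], ?_⟩
    have := ring_a (ca (p 0)) (ca (p 1)) (ca (p 2)) (ca (p 3)) (b := gb K) (ga_sq K)
    simpa [nf] using this
  | hb x hx =>
    obtain ⟨p, rfl⟩ := hx
    refine ⟨![p 2 + 2 * X * p 1, - p 3, p 0 + 2 * X * p 3, - p 1], ?_⟩
    have h4 : 2 * tau K = aeval (tau K) (2 * X : K[X]) := by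
      rw [map_mul, aeval_X, map_ofNat]
    have ct : ∀ p : K[X], aeval (tau K) p * (2 * tau K) = 2 * tau K * aeval (tau K) p := by
      intro p
      rw [h4, ← map_mul, ← map_mul, mul_comm]
    have := ring_b (cb (p 0)) (cb (p 1)) (cb (p 2)) (cb (p 3)) (ct (p 1)) (ct (p 3)) (gb_ga h2)
      (gb_sq K)
    rw [h4, ← map_mul, ← map_mul, ← map_add, ← map_add, ← map_neg, ← map_neg] at this
    exact this

/-- matrix of `a` -/
noncomputable def MA : Matrix (Fin 2) (Fin 2) K[X] := !![1, 0; 0, -1]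
/-- matrix of `b` -/
noncomputable def MB : Matrix (Fin 2) (Fin 2) K[X] := !![X, 1; 1 - X ^ 2, -X]

theorem exists_Phi (h2 : (2 : K) ≠ 0) :
    ∃ Φ : RR K →ₐ[K] Matrix (Fin 2) (Fin 2) K[X], Φ (ga K) = MA ∧ Φ (gb K) = MB ∧
      ∀ p, Φ (nf K p) = !![p 0 + p 1 + X * (p 2 + p 3), p 2 + p 3;
        (1 - X ^ 2) * (p 2 - p 3), p 0 - p 1 - X * p 2 + X * p 3] := by
  obtain ⟨Φ, ha, hb⟩ := exists_algHom K (MA (K := K)) MB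
    (by ext1 i j; fin_cases i <;> fin_cases j <;> simp [MA])
    (by ext1 i j; fin_cases i <;> fin_cases j <;> simp [MB] <;> ring)
  refine ⟨Φ, ha, hb, fun p => ?_⟩
  have hh : (C (2 : K)⁻¹ : K[X]) * 2 = 1 := by
    rw [← C_ofNat, ← C_mul]; simp [h2]
  have ht : Φ (tau K) = algebraMap K[X] _ X := by
    rw [tau, map_smul, map_add, map_mul, map_mul, ha, hb]
    ext1 i j
    fin_cases i <;> fin_cases j <;>
      simp [MA, MB, Matrix.algebraMap_matrix_apply, smul_eq_C_mul]
    all_goals linear_combination X * hh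
  have hp : ∀ q, Φ (aeval (tau K) q) = algebraMap K[X] _ q := by
    intro q
    rw [← aeval_algHom_apply, ht, aeval_algebraMap_apply, aeval_X_left_apply]
  simp only [nf, map_add, map_mul, hp, ha, hb]
  ext1 i j
  fin_cases i <;> fin_cases j <;>
    simp [MA, MB, Matrix.mul_apply, Matrix.algebraMap_matrix_apply] <;> ring


/-- Properties of the faithful matrix representation. -/
structure Good (Φ : RR K →ₐ[K] Matrix (Fin 2) (Fin 2) K[X]) : Prop where
  ha : Φ (ga K) = MA
  hb : Φ (gb K) = MB
  inj : Function.Injective Φ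
  dvd : ∀ u, (1 - X ^ 2 : K[X]) ∣ Φ u 1 0
  surj : ∀ M : Matrix (Fin 2) (Fin 2) K[X], (1 - X ^ 2 : K[X]) ∣ M 1 0 → ∃ u, Φ u = M

theorem half (h2 : (2 : K) ≠ 0) : (C (2 : K)⁻¹ : K[X]) * 2 = 1 := by
  rw [← C_ofNat, ← C_mul]; simp [h2]

theorem w_ne : (1 - X ^ 2 : K[X]) ≠ 0 := by
  intro h
  have := congrArg (fun p => coeff p 0) h
  simp at this

theorem exists_good (h2 : (2 : K) ≠ 0) :
    ∃ Φ : RR K →ₐ[K] Matrix (Fin 2) (Fin 2) K[X], Good Φ := by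
  obtain ⟨Φ, ha, hb, hn⟩ := exists_Phi h2
  have hh := half h2
  refine ⟨Φ, ha, hb, ?_, ?_, ?_⟩
  · rw [injective_iff_map_eq_zero]
    intro u hu
    obtain ⟨p, rfl⟩ := exists_nf h2 u
    rw [hn] at hu
    have e00 : p 0 + p 1 + X * (p 2 + p 3) = 0 := by simpa using congrFun (congrFun hu 0) 0
    have e01 : p 2 + p 3 = 0 := by simpa using congrFun (congrFun hu 0) 1
    have e10 : (1 - X ^ 2) * (p 2 - p 3) = 0 := by simpa using congrFun (congrFun hu 1) 0
    have e11 : p 0 - p 1 - X * p 2 + X * p 3 = 0 := by simpa using congrFun (congrFun hu 1) 1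
    have e10' : p 2 - p 3 = 0 := (mul_eq_zero.mp e10).resolve_left w_ne
    have q2 : p 2 = 0 := by
      linear_combination C (2 : K)⁻¹ * e01 + C (2 : K)⁻¹ * e10' - p 2 * hh
    have q3 : p 3 = 0 := by linear_combination e01 - q2
    have q0 : p 0 = 0 := by
      linear_combination C (2 : K)⁻¹ * e00 + C (2 : K)⁻¹ * e11 - p 0 * hh
        - C (2 : K)⁻¹ * 2 * X * q3
    have q1 : p 1 = 0 := by linear_combination e00 - q0 - X * q2 - X * q3
    simp [nf, q0, q1, q2, q3]
  · intro u
    obtain ⟨p, rfl⟩ := exists_nf h2 u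
    rw [hn]
    exact ⟨p 2 - p 3, by simp⟩
  · rintro M ⟨r, hr⟩
    refine ⟨nf K ![C (2 : K)⁻¹ * (M 0 0 - X * M 0 1 + M 1 1 + X * r),
      C (2 : K)⁻¹ * (M 0 0 - X * M 0 1 - M 1 1 - X * r),
      C (2 : K)⁻¹ * (M 0 1 + r), C (2 : K)⁻¹ * (M 0 1 - r)], ?_⟩
    rw [hn]
    ext1 i j
    fin_cases i <;> fin_cases j <;> simp
    · linear_combination M 0 0 * hh
    · linear_combination M 0 1 * hh
    · rw [hr]; linear_combination (1 - X ^ 2) * r * hh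
    · linear_combination M 1 1 * hh

section
variable {Φ : RR K →ₐ[K] Matrix (Fin 2) (Fin 2) K[X]}

theorem conj_of_s8 (h : Good Φ) (u v : RR K) (G : Matrix (Fin 2) (Fin 2) K[X])
    (hd : G.det = 1) (hw : (1 - X ^ 2 : K[X]) ∣ G 1 0) (hc : Φ u * G = G * Φ v) :
    ∃ ν : (RR K)ˣ, (↑ν⁻¹ : RR K) * u * ν = v := by
  obtain ⟨x, hx⟩ := h.surj G hw
  obtain ⟨y, hy⟩ := h.surj G.adjugate (by
    rw [Matrix.adjugate_fin_two]; simpa using hw)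
  have hxy : G * G.adjugate = 1 := by rw [Matrix.mul_adjugate, hd, one_smul]
  have hyx : G.adjugate * G = 1 := by rw [Matrix.adjugate_mul, hd, one_smul]
  refine ⟨⟨x, y, h.inj ?_, h.inj ?_⟩, h.inj ?_⟩
  · rw [map_mul, hx, hy, hxy, map_one]
  · rw [map_mul, hx, hy, hyx, map_one]
  · change Φ (y * u * x) = _
    rw [map_mul, map_mul, hx, hy, Matrix.mul_assoc, hc, ← Matrix.mul_assoc, hyx, Matrix.one_mul]

theorem factor_s8 (p q m : K[X]) (h : p * (1 - p) = q * m) :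
    ∃ v1 v2 f1 f2 : K[X], p = v1 * f1 ∧ q = v1 * f2 ∧ m = v2 * f1 ∧ 1 - p = v2 * f2 := by
  by_cases hp : p = 0
  · subst hp
    rcases mul_eq_zero.mp (show q * m = 0 by rw [← h]; ring) with rfl | rfl
    · exact ⟨0, 1, m, 1, by ring, by ring, by ring, by ring⟩
    · exact ⟨q, 1, 0, 1, by ring, by ring, by ring, by ring⟩
  · obtain ⟨v1, f1, ⟨f2, h1⟩, ⟨v2, h2⟩, rfl⟩ :=
      exists_dvd_and_dvd_of_dvd_mul (Dvd.intro _ h : p ∣ q * m)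
    refine ⟨v1, v2, f1, f2, rfl, h1, by rw [h2]; ring, ?_⟩
    apply mul_left_cancel₀ hp
    rw [h, h1, h2]; ring

theorem Phi_a (h2 : (2 : K) ≠ 0) (h : Good Φ) :
    Φ ((2 : K)⁻¹ • (1 + ga K)) = !![1, 0; 0, 0] := by
  have hh := half h2
  rw [map_smul, map_add, map_one, h.ha]
  ext1 i j
  fin_cases i <;> fin_cases j <;> simp [MA, smul_eq_C_mul]
  linear_combination hh

theorem Phi_b (h : Good Φ) :
    Φ ((2 : K)⁻¹ • (1 + gb K)) = !![C (2 : K)⁻¹ * (1 + X), C (2 : K)⁻¹;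
      C (2 : K)⁻¹ * (1 - X ^ 2), C (2 : K)⁻¹ * (1 - X)] := by
  rw [map_smul, map_add, map_one, h.hb]
  ext1 i j
  fin_cases i <;> fin_cases j <;> simp [MB, smul_eq_C_mul] <;> ring

theorem dvd_one_sub {p : K[X]} (h : eval 1 p = 0) : ∃ c, p = (1 - X) * c := by
  obtain ⟨c, hc⟩ := dvd_iff_isRoot.mpr h
  exact ⟨-c, by rw [hc]; simp; ring⟩

theorem dvd_one_add {p : K[X]} (h : eval (-1) p = 0) : ∃ c, p = (1 + X) * c := by
  obtain ⟨c, hc⟩ := dvd_iff_isRoot.mpr h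
  exact ⟨c, by rw [hc, C_neg, C_1]; ring⟩

theorem case_main (h2 : (2 : K) ≠ 0) (h : Good Φ) (u : RR K) (p q r : K[X])
    (hu : Φ u = !![p, q; (1 - X ^ 2) * r, 1 - p]) (hp : p * (1 - p) = q * ((1 - X ^ 2) * r))
    (e1 : eval 1 p = 1) (e2 : eval (-1) p = 0 ∨ eval (-1) p = 1) :
    ∃ ν : (RR K)ˣ, (↑ν⁻¹ : RR K) * u * ν = (2 : K)⁻¹ • (1 + ga K) ∨
      (↑ν⁻¹ : RR K) * u * ν = (2 : K)⁻¹ • (1 + gb K) := by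
  have hh := half h2
  obtain ⟨v1, v2, f1, f2, hp', hq, hm, hs⟩ := factor_s8 _ _ _ hp
  have hdet : v1 * f1 + v2 * f2 = 1 := by rw [← hp', ← hs]; ring
  have hv2 : eval 1 v2 = 0 := by
    have a1 := congrArg (eval 1) hm
    have a2 := congrArg (eval 1) hp'
    simp [e1] at a1 a2
    rcases a1 with a1 | a1
    · exact a1
    · rw [a1] at a2; simp at a2
  obtain ⟨c, hc⟩ := dvd_one_sub hv2
  have m1 := congrArg (eval (-1)) hm
  have m2 := congrArg (eval (-1)) hp'
  have m3 := congrArg (eval (-1)) hs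
  simp at m1 m2 m3
  let G : Matrix (Fin 2) (Fin 2) K[X] := !![v1, -f2; v2, f1]
  have hG : G.det = 1 := by
    simp only [G, Matrix.det_fin_two_of]; linear_combination hdet
  have hE : Φ u * G = G * !![1, 0; 0, 0] := by
    rw [hu, hm, hs, hq, hp']
    ext1 i j
    fin_cases i <;> fin_cases j <;> simp [G]
    · linear_combination v1 * hdet
    · ring
    · linear_combination v2 * hdet
    · ring
  rcases e2 with e2 | e2
  · rw [e2] at m2 m3
    have hf : eval (-1) f1 = 0 := by
      rcases m1 with m1 | m1
      · rw [m1] at m3; simp at m3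
      · exact m1
    obtain ⟨d, hd⟩ := dvd_one_add hf
    let G0 : Matrix (Fin 2) (Fin 2) K[X] :=
      !![C (2 : K)⁻¹ * (1 + X), C (2 : K)⁻¹; -(1 - X), 1]
    have hG0 : G0.det = 1 := by
      simp only [G0, Matrix.det_fin_two_of]; linear_combination hh
    have hF : !![1, 0; 0, 0] * G0 = G0 * Φ ((2 : K)⁻¹ • (1 + gb K)) := by
      rw [Phi_b h]
      ext1 i j
      fin_cases i <;> fin_cases j <;> simp [G0]
      · linear_combination (-C (2 : K)⁻¹ * (1 + X)) * hh
      · linear_combination (-C (2 : K)⁻¹) * hh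
      · ring
      · ring
    obtain ⟨ν, hν⟩ := conj_of_s8 h u ((2 : K)⁻¹ • (1 + gb K)) (G * G0)
      (by rw [Matrix.det_mul, hG, hG0, one_mul])
      (by
        refine ⟨C (2 : K)⁻¹ * c - d, ?_⟩
        simp [G, G0, Matrix.mul_apply, Fin.sum_univ_two]
        rw [hc, hd]; ring)
      (by rw [← Matrix.mul_assoc, hE, Matrix.mul_assoc, hF, Matrix.mul_assoc])
    exact ⟨ν, Or.inr hν⟩
  · have hv : eval (-1) v2 = 0 := by
      rcases m1 with m1 | m1
      · exact m1
      · rw [m1, e2] at m2; simp at m2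
    have hcc : eval (-1) c = 0 := by
      rw [hc] at hv
      simp at hv
      rcases hv with hv | hv
      · exact absurd (by rw [← hv]; norm_num) h2
      · exact hv
    obtain ⟨d, hd⟩ := dvd_one_add hcc
    obtain ⟨ν, hν⟩ := conj_of_s8 h u ((2 : K)⁻¹ • (1 + ga K)) G hG
      ⟨d, by simp only [G]; simp; rw [hc, hd]; ring⟩ (by rw [hE, Phi_a h2 h])
    exact ⟨ν, Or.inl hν⟩

theorem one_sub_half (h2 : (2 : K) ≠ 0) (x : RR K) :
    1 - (2 : K)⁻¹ • (1 + x) = (2 : K)⁻¹ • (1 - x) := by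
  have : (1 : RR K) = (2 : K)⁻¹ • (1 + 1) := by
    rw [smul_add, ← add_smul, ← two_mul, mul_inv_cancel₀ h2, one_smul]
  nth_rw 1 [this]
  rw [← smul_sub]; congr 1; abel

theorem existence (h2 : (2 : K) ≠ 0) (u : RR K) (hu : u * u = u) :
    ∃ v, v ∈ ({0, 1, (2 : K)⁻¹ • (1 - ga K), (2 : K)⁻¹ • (1 + ga K),
        (2 : K)⁻¹ • (1 - gb K), (2 : K)⁻¹ • (1 + gb K)} : Set (RR K)) ∧
      ∃ ν : (RR K)ˣ, (↑ν⁻¹ : RR K) * u * ν = v := by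
  obtain ⟨Φ, h⟩ := exists_good h2
  obtain ⟨r, hr⟩ := h.dvd u
  obtain ⟨p, hp⟩ : ∃ p, Φ u 0 0 = p := ⟨_, rfl⟩
  obtain ⟨q, hq⟩ : ∃ q, Φ u 0 1 = q := ⟨_, rfl⟩
  obtain ⟨s, hs⟩ : ∃ s, Φ u 1 1 = s := ⟨_, rfl⟩
  have hM : Φ u = !![p, q; (1 - X ^ 2) * r, s] := by
    rw [← hr, ← hp, ← hq, ← hs]; exact Matrix.eta_fin_two _
  have hM2 : Φ u * Φ u = Φ u := by rw [← map_mul, hu]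
  rw [hM] at hM2
  have e00 := congrFun (congrFun hM2 0) 0
  have e01 := congrFun (congrFun hM2 0) 1
  have e10 := congrFun (congrFun hM2 1) 0
  have e11 := congrFun (congrFun hM2 1) 1
  simp only [Matrix.mul_apply, Fin.sum_univ_two] at e00 e01 e10 e11
  simp [-mul_eq_mul_left_iff, -mul_eq_mul_right_iff] at e00 e01 e10 e11
  by_cases hps : p + s - 1 = 0
  · have hs' : s = 1 - p := by linear_combination hps
    subst hs'
    have hpp : p * (1 - p) = q * ((1 - X ^ 2) * r) := by linear_combination -e00
    have hev : ∀ x : K, x ^ 2 = 1 → eval x p = 0 ∨ eval x p = 1 := by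
      intro x hx
      have := congrArg (eval x) hpp
      simp [hx] at this
      rcases this with h | h
      · exact Or.inl h
      · right; linear_combination -h
    rcases hev 1 (by norm_num) with e1 | e1
    · obtain ⟨ν, hν⟩ := case_main h2 h (1 - u) (1 - p) (-q) (-r)
        (by rw [map_sub, map_one, hM]
            ext1 i j
            fin_cases i <;> fin_cases j <;> simp)
        (by linear_combination hpp) (by simp [e1])
        (by rcases hev (-1) (by norm_num) with e | e
            · right; simp [e]
            · left; simp [e])
      have hc : (↑ν⁻¹ : RR K) * (1 - u) * ν = 1 - (↑ν⁻¹ : RR K) * u * ν := by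
        rw [mul_sub, sub_mul, mul_one, Units.inv_mul]
      rw [hc] at hν
      rcases hν with hν | hν
      · refine ⟨_, ?_, ν, rfl⟩
        have : (↑ν⁻¹ : RR K) * u * ν = (2 : K)⁻¹ • (1 - ga K) := by
          rw [← one_sub_half h2, ← hν]; abel
        rw [this]; simp
      · refine ⟨_, ?_, ν, rfl⟩
        have : (↑ν⁻¹ : RR K) * u * ν = (2 : K)⁻¹ • (1 - gb K) := by
          rw [← one_sub_half h2, ← hν]; abel
        rw [this]; simp
    · obtain ⟨ν, hν⟩ := case_main h2 h u p q r hM hpp e1 (hev (-1) (by norm_num))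
      refine ⟨_, ?_, ν, rfl⟩
      rcases hν with hν | hν <;> rw [hν] <;> simp
  · have hq0 : q = 0 := by
      have : q * (p + s - 1) = 0 := by linear_combination e01
      exact (mul_eq_zero.mp this).resolve_right hps
    have hr0 : (1 - X ^ 2) * r = 0 := by
      have : ((1 - X ^ 2) * r) * (p + s - 1) = 0 := by linear_combination e10
      exact (mul_eq_zero.mp this).resolve_right hps
    rw [hq0, hr0] at hM
    subst hq0
    have hp0 : p * (p - 1) = 0 := by linear_combination e00
    have hs0 : s * (s - 1) = 0 := by linear_combination e11
    have hpe : (p = 0 ∧ s = 0) ∨ (p = 1 ∧ s = 1) := by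
      rcases mul_eq_zero.mp hp0 with a | a <;> rcases mul_eq_zero.mp hs0 with b | b
      · exact Or.inl ⟨a, b⟩
      · exact absurd (by rw [a]; linear_combination b) hps
      · exact absurd (by rw [b]; linear_combination a) hps
      · exact Or.inr ⟨by linear_combination a, by linear_combination b⟩
    rcases hpe with ⟨rfl, rfl⟩ | ⟨rfl, rfl⟩
    · have : u = 0 := h.inj (by rw [hM, map_zero]; ext1 i j; fin_cases i <;> fin_cases j <;> simp)
      exact ⟨0, by simp, 1, by simp [this]⟩
    · have : u = 1 := h.inj (by rw [hM, map_one]; ext1 i j; fin_cases i <;> fin_cases j <;> simp)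
      exact ⟨1, by simp, 1, by simp [this]⟩

end

theorem uniq_s8 (h2 : (2 : K) ≠ 0) (v v' : RR K)
    (hv : v ∈ ({0, 1, (2 : K)⁻¹ • (1 - ga K), (2 : K)⁻¹ • (1 + ga K),
        (2 : K)⁻¹ • (1 - gb K), (2 : K)⁻¹ • (1 + gb K)} : Set (RR K)))
    (hv' : v' ∈ ({0, 1, (2 : K)⁻¹ • (1 - ga K), (2 : K)⁻¹ • (1 + ga K),
        (2 : K)⁻¹ • (1 - gb K), (2 : K)⁻¹ • (1 + gb K)} : Set (RR K)))
    (h : ∀ f : RR K →ₐ[K] K, f v = f v') : v = v' := by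
  obtain ⟨f1, a1, b1⟩ := exists_algHom K (1 : K) 1 (by norm_num) (by norm_num)
  obtain ⟨f2, a2, b2⟩ := exists_algHom K (1 : K) (-1) (by norm_num) (by norm_num)
  obtain ⟨f3, a3, b3⟩ := exists_algHom K (-1 : K) 1 (by norm_num) (by norm_num)
  obtain ⟨f4, a4, b4⟩ := exists_algHom K (-1 : K) (-1) (by norm_num) (by norm_num)
  have c1 := h f1
  have c2 := h f2
  have c3 := h f3
  have c4 := h f4
  have hz : (2 : K)⁻¹ * (1 + 1) = 1 := by rw [one_add_one_eq_two, inv_mul_cancel₀ h2]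
  simp only [Set.mem_insert_iff, Set.mem_singleton_iff] at hv hv'
  rcases hv with rfl | rfl | rfl | rfl | rfl | rfl <;>
    rcases hv' with rfl | rfl | rfl | rfl | rfl | rfl <;>
    first
    | rfl
    | (exfalso
       simp only [map_smul, map_add, map_sub, map_one, map_zero, a1, b1, a2, b2, a3, b3, a4, b4,
         smul_eq_mul, sub_neg_eq_add, hz, sub_self, add_neg_cancel, mul_zero, zero_ne_one,
         one_ne_zero] at c1 c2 c3 c4)

theorem char_conj (f : RR K →ₐ[K] K) (u : RR K) (ν : (RR K)ˣ) :
    f ((↑ν⁻¹ : RR K) * u * ν) = f u := by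
  rw [map_mul, map_mul, mul_right_comm, ← map_mul, Units.inv_mul, map_one, one_mul]

end DInf


theorem stmt_8 (K : Type*) [Field K] [IsAlgClosed K] (hK : ringChar K ≠ 2)
    (u : MonoidAlgebra K (DihedralGroup 0)) (hu : IsIdempotentElem u) :
    let R := MonoidAlgebra K (DihedralGroup 0)
    let a : R := MonoidAlgebra.of K (DihedralGroup 0) (DihedralGroup.sr 0)
    let b : R := MonoidAlgebra.of K (DihedralGroup 0) (DihedralGroup.sr 1)
    ∃! v, v ∈ ({0, 1, (2 : K)⁻¹ • (1 - a), (2 : K)⁻¹ • (1 + a),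
        (2 : K)⁻¹ • (1 - b), (2 : K)⁻¹ • (1 + b)} : Set R) ∧
      ∃ ν : Rˣ, (↑ν⁻¹ : R) * u * ν = v := by
  intro R a b
  have h2 : (2 : K) ≠ 0 := DInf.two_ne_s8 hK
  obtain ⟨v, hv, ν, hν⟩ := DInf.existence h2 u hu
  refine ⟨v, ⟨hv, ν, hν⟩, ?_⟩
  rintro v' ⟨hv', μ, hμ⟩
  refine DInf.uniq_s8 h2 v' v hv' hv ?_
  intro f
  rw [← hν, ← hμ]
  exact (DInf.char_conj f u μ).trans (DInf.char_conj f u ν).symm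
end
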